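/- arXiv:math/0507529 — 4 statements merged into one kernel-verified Lean document; each statement's English description precedes it below -/
import Mathlib

section
/- Let α, β > 0 be real numbers. A 2×2 contingency table P (strictly positive entries summing to 1) satisfies r_× = α² and r_∥ = β² if and only if there exists a real number v with 0 < v < 1/(α+β) such that p₀₀ = (β/(β + 1/α))·(1 − (β+α)v), p₀₁ = (1/(αβ+1))·(1 − (β+α)v), p₁₀ = βv, and p₁₁ = αv. -/
/-- A 2×2 contingency table (positive entries summing to 1) satisfies
`r_× = α²` and `r_∥ = β²` iff it has the parametric form of Proposition `x=PROP`
for some `0 < v < 1/(α+β)`. -/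
theorem stmt_3 (α β p00 p01 p10 p11 : ℝ) (hα : 0 < α) (hβ : 0 < β)
    (h00 : 0 < p00) (h01 : 0 < p01) (h10 : 0 < p10) (h11 : 0 < p11)
    (hsum : p00 + p01 + p10 + p11 = 1) :
    (p00 * p11 / (p01 * p10) = α ^ 2 ∧ p00 * p10 / (p01 * p11) = β ^ 2) ↔
    ∃ v : ℝ, 0 < v ∧ v < 1 / (α + β) ∧
      p00 = (β / (β + 1 / α)) * (1 - (β + α) * v) ∧
      p01 = (1 / (α * β + 1)) * (1 - (β + α) * v) ∧
      p10 = β * v ∧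
      p11 = α * v := by
  have hc : β / (β + 1 / α) = α * β * (1 / (α * β + 1)) := by
    field_simp
  have hab : 0 < α * β := mul_pos hα hβ
  constructor
  · rintro ⟨h1, h2⟩
    rw [div_eq_iff (by positivity)] at h1 h2
    have h3 : p00 ^ 2 = (α * β * p01) ^ 2 := by
      have : (p10 * p11) * p00 ^ 2 = (p10 * p11) * (α * β * p01) ^ 2 := by
        calc _ = (p00 * p11) * (p00 * p10) := by ring
          _ = _ := by rw [h1, h2]; ring
      exact mul_left_cancel₀ (by positivity) this
    have h4 : p00 = α * β * p01 :=
      (pow_left_inj₀ h00.le (by positivity) two_ne_zero).1 h3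
    have h5 : β * p11 = α * p10 := by
      have : (α * p01) * (β * p11) = (α * p01) * (α * p10) := by
        rw [h4] at h1; linarith
      exact mul_left_cancel₀ (by positivity) this
    have h11' : p11 = α * (p11 / α) := by field_simp
    have h10' : p10 = β * (p11 / α) := by
      field_simp; linarith
    have hv : 0 < p11 / α := by positivity
    generalize p11 / α = v at *
    have h6 : (α * β + 1) * p01 = 1 - (β + α) * v := by
      rw [h4, h10', h11'] at hsum; linarith
    have h01' : p01 = (1 / (α * β + 1)) * (1 - (β + α) * v) := by
      rw [← h6]; field_simp
    refine ⟨v, hv, ?_, ?_, h01', h10', h11'⟩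
    · rw [lt_div_iff₀ (by positivity)]
      have : 0 < (α * β + 1) * p01 := by positivity
      linarith
    · rw [hc, mul_assoc, ← h01', h4]
  · rintro ⟨v, hv, -, e0, e1, e2, e3⟩
    rw [hc, mul_assoc, ← e1] at e0
    subst e0 e2 e3
    clear e1 hsum hc
    constructor
    · field_simp
    · field_simp
end

section
/- Let α, β > 0. The function f(v) = (1/(αβ+1))·(1 − (β+α)v)²/v maps the open interval (0, 1/(α+β)) bijectively onto (0, +∞); in particular it is strictly decreasing on this interval. Consequently, with r_× = α² and r_∥ = β² fixed, the third ratio r_= can take any value in (0, +∞). -/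
/-- For `α, β > 0`, the function
`f(v) = (1/(αβ+1))·(1 − (β+α)v)²/v` maps `(0, 1/(α+β))` bijectively onto `(0, ∞)`,
and is strictly decreasing on this interval. -/
theorem stmt_5 (α β : ℝ) (hα : 0 < α) (hβ : 0 < β) :
    Set.BijOn (fun v : ℝ => (1 / (α * β + 1)) * (1 - (β + α) * v) ^ 2 / v)
        (Set.Ioo 0 (1 / (α + β))) (Set.Ioi 0) ∧
    StrictAntiOn (fun v : ℝ => (1 / (α * β + 1)) * (1 - (β + α) * v) ^ 2 / v)
        (Set.Ioo 0 (1 / (α + β))) := by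
  have hs : 0 < α + β := by positivity
  have hc : 0 < α * β + 1 := by positivity
  have key : ∀ v ∈ Set.Ioo (0:ℝ) (1 / (α + β)), 0 < 1 - (β + α) * v := by
    intro v hv
    have h := (lt_div_iff₀ hs).1 hv.2
    nlinarith
  have anti : StrictAntiOn (fun v : ℝ => (1 / (α * β + 1)) * (1 - (β + α) * v) ^ 2 / v)
      (Set.Ioo 0 (1 / (α + β))) := by
    intro a ha b hb hab
    have h1 := key a ha
    have h2 := key b hb
    have ha0 := ha.1
    have hb0 := hb.1
    have h3 : 1 - (β + α) * b < 1 - (β + α) * a := by nlinarith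
    have h4 : (1 - (β + α) * b) ^ 2 < (1 - (β + α) * a) ^ 2 := by gcongr
    have h5 : 1 / (α * β + 1) * (1 - (β + α) * b) ^ 2
        < 1 / (α * β + 1) * (1 - (β + α) * a) ^ 2 :=
      mul_lt_mul_of_pos_left h4 (by positivity)
    have h6 : 0 < 1 / (α * β + 1) * (1 - (β + α) * a) ^ 2 := by positivity
    show 1 / (α * β + 1) * (1 - (β + α) * b) ^ 2 / b
        < 1 / (α * β + 1) * (1 - (β + α) * a) ^ 2 / a
    rw [div_lt_div_iff₀ hb0 ha0]
    nlinarith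
  refine ⟨⟨?_, anti.injOn, ?_⟩, anti⟩
  · intro v hv
    have h1 := key v hv
    have h0 := hv.1
    show 0 < 1 / (α * β + 1) * (1 - (β + α) * v) ^ 2 / v
    positivity
  · intro y hy
    have hy0 : 0 < y := hy
    have hcont : ContinuousOn (fun v : ℝ => (1 - (β + α) * v) ^ 2 - y * (α * β + 1) * v)
        (Set.Icc 0 (1 / (α + β))) := by fun_prop
    have hivt := intermediate_value_Ioo' (by positivity : (0:ℝ) ≤ 1 / (α + β)) hcont
    have hmem : (0:ℝ) ∈ Set.Ioo
        ((1 - (β + α) * (1 / (α + β))) ^ 2 - y * (α * β + 1) * (1 / (α + β)))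
        ((1 - (β + α) * 0) ^ 2 - y * (α * β + 1) * 0) := by
      constructor
      · have e : (β + α) * (1 / (α + β)) = 1 := by rw [add_comm β α]; field_simp
        have : 0 < y * (α * β + 1) * (1 / (α + β)) := by positivity
        rw [e]; linarith
      · norm_num
    obtain ⟨v, hv, hv'⟩ := hivt hmem
    refine ⟨v, hv, ?_⟩
    have h0 := hv.1
    have h7 : (1 - (β + α) * v) ^ 2 = y * (α * β + 1) * v := by
      have : (1 - (β + α) * v) ^ 2 - y * (α * β + 1) * v = 0 := hv'
      linarith
    show 1 / (α * β + 1) * (1 - (β + α) * v) ^ 2 / v = y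
    rw [h7]
    field_simp
end

section
/- Let β, γ > 0 be real numbers. A 2×2 contingency table P (strictly positive entries summing to 1) satisfies r_∥ = β² and r_= = γ² if and only if there exists a real number v with 0 < v < 1/(β+γ) such that p₀₀ = (β/(β + 1/γ))·(1 − (β+γ)v), p₀₁ = γv, p₁₀ = βv, and p₁₁ = (1/(βγ+1))·(1 − (β+γ)v). -/
/-- A 2×2 contingency table satisfies `r_∥ = β²` and `r_= = γ²`
iff it has the parametric form of Proposition `==PROP` for some `0 < v < 1/(β+γ)`. -/
theorem stmt_8 (β γ p00 p01 p10 p11 : ℝ) (hβ : 0 < β) (hγ : 0 < γ)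
    (h00 : 0 < p00) (h01 : 0 < p01) (h10 : 0 < p10) (h11 : 0 < p11)
    (hsum : p00 + p01 + p10 + p11 = 1) :
    (p00 * p10 / (p01 * p11) = β ^ 2 ∧ p00 * p01 / (p10 * p11) = γ ^ 2) ↔
    ∃ v : ℝ, 0 < v ∧ v < 1 / (β + γ) ∧
      p00 = (β / (β + 1 / γ)) * (1 - (β + γ) * v) ∧
      p01 = γ * v ∧
      p10 = β * v ∧
      p11 = (1 / (β * γ + 1)) * (1 - (β + γ) * v) := by
  have hk : β / (β + 1 / γ) = β * γ * (1 / (β * γ + 1)) := by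
    field_simp
  have hpos : 0 < β * γ + 1 := by positivity
  rw [hk]
  constructor
  · rintro ⟨h1, h2⟩
    rw [div_eq_iff (by positivity)] at h1 h2
    have hsq : p00 ^ 2 = (β * γ * p11) ^ 2 := by
      have hne : p01 * p10 ≠ 0 := by positivity
      apply mul_right_cancel₀ hne
      calc p00 ^ 2 * (p01 * p10) = (p00 * p10) * (p00 * p01) := by ring
        _ = (β * γ * p11) ^ 2 * (p01 * p10) := by rw [h1, h2]; ring
    have h3 : p00 = β * γ * p11 :=
      (pow_left_inj₀ h00.le (by positivity) two_ne_zero).1 hsq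
    have h4 : γ * p10 = β * p01 := by
      have hne : β * p11 ≠ 0 := by positivity
      apply mul_left_cancel₀ hne
      rw [h3] at h1
      linarith
    have e1 : p01 = γ * (p01 / γ) := by field_simp
    have e2 : p10 = β * (p01 / γ) := by field_simp; linarith
    have e3 : 1 - (β + γ) * (p01 / γ) = (β * γ + 1) * p11 := by linarith
    refine ⟨p01 / γ, by positivity, ?_, ?_, e1, e2, ?_⟩
    · rw [lt_div_iff₀ (by positivity)]
      have : 0 < (β * γ + 1) * p11 := by positivity
      linarith
    · rw [e3, h3]; field_simp
    · rw [e3]; field_simp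
  · rintro ⟨v, hv, -, e0, e1, e2, e3⟩
    have h3 : p00 = β * γ * p11 := by rw [e0, e3]; ring
    rw [h3, e1, e2]
    constructor <;> field_simp
end

section
/- Let β, γ > 0. The function g(v) = (β/(βγ+1))²·(1 − (β+γ)v)²/v² maps the open interval (0, 1/(β+γ)) bijectively onto (0, +∞). Consequently, with r_∥ = β² and r_= = γ² fixed, the third ratio r_× can take any value in (0, +∞). -/
/-- For `β, γ > 0`, the function
`g(v) = (β/(βγ+1))²·(1 − (β+γ)v)²/v²` maps `(0, 1/(β+γ))` bijectively onto `(0, ∞)`. -/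
theorem stmt_10 (β γ : ℝ) (hβ : 0 < β) (hγ : 0 < γ) :
    Set.BijOn (fun v : ℝ => (β / (β * γ + 1)) ^ 2 * (1 - (β + γ) * v) ^ 2 / v ^ 2)
      (Set.Ioo 0 (1 / (β + γ))) (Set.Ioi 0) := by
  have hc : 0 < β / (β * γ + 1) := by positivity
  have hs : 0 < β + γ := by positivity
  generalize β / (β * γ + 1) = c at hc
  generalize β + γ = s at hs
  have key : ∀ v ∈ Set.Ioo 0 (1 / s), 0 < v ∧ 0 < 1 - s * v := by
    rintro v ⟨h0, h1⟩
    rw [lt_div_iff₀ hs] at h1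
    exact ⟨h0, by linarith⟩
  refine ⟨?_, ?_, ?_⟩
  · intro v hv
    obtain ⟨h0, h1⟩ := key v hv
    simp only [Set.mem_Ioi]
    positivity
  · intro v hv w hw h
    obtain ⟨h0, h1⟩ := key v hv
    obtain ⟨h2, h3⟩ := key w hw
    simp only [← mul_pow, ← div_pow] at h
    have h4 := (pow_left_inj₀ (by positivity) (by positivity) two_ne_zero).1 h
    rw [div_eq_div_iff h0.ne' h2.ne'] at h4
    have h5 : c * (w - v) = 0 := by linear_combination h4
    rcases mul_eq_zero.1 h5 with h6 | h6
    · exact absurd h6 hc.ne'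
    · linarith
  · intro y hy
    have hy' : 0 < y := hy
    have hr : 0 < √y := Real.sqrt_pos.2 hy'
    have hd : 0 < √y + c * s := by positivity
    refine ⟨c / (√y + c * s), ⟨by positivity, ?_⟩, ?_⟩
    · rw [div_lt_div_iff₀ hd hs]
      linarith
    · have e : c * (1 - s * (c / (√y + c * s))) / (c / (√y + c * s)) = √y := by
        field_simp
        ring
      simp only [← mul_pow, ← div_pow]
      rw [e, Real.sq_sqrt hy'.le]
end
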